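/- (Score decomposition for arc-eager, the bookkeeping underlying the score-annotated deduction rules.) Let t be a complete arc-eager transition sequence for a sentence of length n ≥ 1 and let (f_sh, f_ra, f_rl, f_re) be any arc-eager parameterization. For each index i ∈ {0,…,n}, let k_i be the stack-top feature (⊥ if the stack is empty) of the configuration in which i is pushed; for each i ∈ {1,…,n}, let p_i be the buffer-front feature (n+1 if the buffer is empty) of the configuration in which i is popped. Then F(t) = f_sh(⊥, 0) + Σ_{i pushed by sh, i ≥ 1} ( f_sh(k_i, i) + f_rl(i, p_i) ) + Σ_{i pushed by ra} ( f_ra(k_i, i) + f_re(i, p_i) ), and moreover A(t) = { (p_i, i) : i ≥ 1 pushed by sh } ∪ { (k_i, i) : i pushed by ra }. -/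

import Mathlib

/-- A parser configuration: a stack of indices (head of the list = top of stack),
a buffer of indices (head of the list = front of buffer), and a set of arcs
`(h, m)` meaning `h` is the head of modifier `m`. -/
structure Config where
  stack : List ℕ
  buffer : List ℕ
  arcs : Finset (ℕ × ℕ)

/-- Initial configuration for a sentence of length `n`:
empty stack, buffer `[0, 1, …, n]` (ROOT is index 0), empty arc set. -/
def initConfig (n : ℕ) : Config := ⟨[], List.range (n + 1), ∅⟩

/-- Stack-top feature of a configuration: `none` plays the role of the dummy index ⊥
used when the stack is empty. -/
def stackFeat (c : Config) : Option ℕ := c.stack.head?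

/-- Buffer-front feature of a configuration: the end-marker index `n + 1`
when the buffer is empty. -/
def bufFeat (n : ℕ) (c : Config) : ℕ := c.buffer.headD (n + 1)

/-- Arc-eager transition labels. -/
inductive ETrans
  | sh | rl | ra | re
deriving DecidableEq

/-- Single arc-eager transitions between configurations. -/
inductive EStep : Config → ETrans → Config → Prop
  | sh (σ b β A) : EStep ⟨σ, b :: β, A⟩ .sh ⟨b :: σ, β, A⟩
  | rl (s σ b β A) (h : ∀ x, (x, s) ∉ A) :
      EStep ⟨s :: σ, b :: β, A⟩ .rl ⟨σ, b :: β, insert (b, s) A⟩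
  | ra (s σ b β A) :
      EStep ⟨s :: σ, b :: β, A⟩ .ra ⟨b :: s :: σ, β, insert (s, b) A⟩
  | re (s σ β A) (h : ∃ x, (x, s) ∈ A) :
      EStep ⟨s :: σ, β, A⟩ .re ⟨σ, β, A⟩

/-- `ETrace c t c'` holds when `t` is a list of (configuration, transition) pairs,
each transition taken in the recorded configuration, leading from `c` to `c'`. -/
inductive ETrace : Config → List (Config × ETrans) → Config → Prop
  | nil (c) : ETrace c [] c
  | cons {c c' cf : Config} {τ : ETrans} {rest} :
      EStep c τ c' → ETrace c' rest cf → ETrace c ((c, τ) :: rest) cf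

/-- Score of an arc-eager transition sequence under parameterization
`(fsh, fra, frl, fre)`: the sum, over the transitions, of the corresponding
scoring function evaluated at the feature pair of the configuration in which
the transition is taken. -/
def escore (n : ℕ) (fsh fra frl fre : Option ℕ → ℕ → ℝ)
    (t : List (Config × ETrans)) : ℝ :=
  (t.map fun e =>
    (match e.2 with
      | ETrans.sh => fsh
      | ETrans.ra => fra
      | ETrans.rl => frl
      | ETrans.re => fre) (stackFeat e.1) (bufFeat n e.1)).sum

/-- Arc-hybrid transition labels. -/
inductive HTrans
  | sh | rr | rl
deriving DecidableEq

/-- Single arc-hybrid transitions between configurations. -/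
inductive HStep : Config → HTrans → Config → Prop
  | sh (σ b β A) : HStep ⟨σ, b :: β, A⟩ .sh ⟨b :: σ, β, A⟩
  | rr (s0 s1 σ β A) :
      HStep ⟨s0 :: s1 :: σ, β, A⟩ .rr ⟨s1 :: σ, β, insert (s1, s0) A⟩
  | rl (s σ b β A) :
      HStep ⟨s :: σ, b :: β, A⟩ .rl ⟨σ, b :: β, insert (b, s) A⟩

/-- `HTrace c t c'` holds when `t` is a list of (configuration, transition) pairs,
each transition taken in the recorded configuration, leading from `c` to `c'`. -/
inductive HTrace : Config → List (Config × HTrans) → Config → Prop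
  | nil (c) : HTrace c [] c
  | cons {c c' cf : Config} {τ : HTrans} {rest} :
      HStep c τ c' → HTrace c' rest cf → HTrace c ((c, τ) :: rest) cf

/-- Score of an arc-hybrid transition sequence under parameterization
`(gsh, grr, grl)`. -/
def hscore (n : ℕ) (gsh grr grl : Option ℕ → ℕ → ℝ)
    (t : List (Config × HTrans)) : ℝ :=
  (t.map fun e =>
    (match e.2 with
      | HTrans.sh => gsh
      | HTrans.rr => grr
      | HTrans.rl => grl) (stackFeat e.1) (bufFeat n e.1)).sum

/-- Index `i` is pushed by a sh transition somewhere in `t`. -/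
def pushedBySh (t : List (Config × ETrans)) (i : ℕ) : Bool :=
  t.any fun e => e.2 == ETrans.sh && e.1.buffer.head? == some i

/-- Index `i` is pushed by an ra transition somewhere in `t`. -/
def pushedByRa (t : List (Config × ETrans)) (i : ℕ) : Bool :=
  t.any fun e => e.2 == ETrans.ra && e.1.buffer.head? == some i

/-!
Each transition contributes one score term and at most one arc, both determined by the index it
pushes or pops and the features `k`, `p` of that index; so score and arc set are a sum and a union
over the multisets of indices pushed by `sh`, pushed by `ra`, popped by `rl` and popped by `re`.
It remains to match pushes with pops. Since an index receives its head exactly when it is pushed by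
`ra` or popped by `rl`, the headless elements of the stack grow by `sh` and shrink by `rl`, while
`ra` and `re` leave them alone. Along a complete sequence this balance, together with that of the
whole stack, says that the `sh`-pushed indices are ROOT and the `rl`-popped ones, and that the
`ra`-pushed indices are the `re`-popped ones. That ROOT ends up headless comes from the same
balances: otherwise it would have been pushed by `ra`, but the empty stack forces it to be pushed
by `sh`, and each index is pushed only once.
-/

/-- The indices pushed by the `τ`-transitions of `t`, with multiplicity. Only meaningful for
`τ = .sh` and `τ = .ra`. -/
def pushedBy (τ : ETrans) (t : List (Config × ETrans)) : Multiset ℕ :=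
  ↑(t.filterMap fun e => if e.2 = τ then e.1.buffer.head? else none)

/-- The indices popped by the `τ`-transitions of `t`, with multiplicity. Only meaningful for
`τ = .rl` and `τ = .re`. -/
def poppedBy (τ : ETrans) (t : List (Config × ETrans)) : Multiset ℕ :=
  ↑(t.filterMap fun e => if e.2 = τ then e.1.stack.head? else none)

/-- `k i` is the stack-top feature of every configuration in which `t` pushes `i`. -/
def IsPushFeature (t : List (Config × ETrans)) (k : ℕ → Option ℕ) : Prop :=
  ∀ e ∈ t, (e.2 = ETrans.sh ∨ e.2 = ETrans.ra) →
    ∀ i, e.1.buffer.head? = some i → stackFeat e.1 = k i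

/-- `p i` is the buffer-front feature of every configuration in which `t` pops `i`, for a
sentence of length `n`. -/
def IsPopFeature (n : ℕ) (t : List (Config × ETrans)) (p : ℕ → ℕ) : Prop :=
  ∀ e ∈ t, (e.2 = ETrans.rl ∨ e.2 = ETrans.re) →
    ∀ i, e.1.stack.head? = some i → bufFeat n e.1 = p i

section Transitions

variable (τ : ETrans) (e : Config × ETrans) (t : List (Config × ETrans)) (i : ℕ)

theorem pushedBy_cons : pushedBy τ (e :: t) = pushedBy τ [e] + pushedBy τ t := by
  rw [pushedBy, ← List.singleton_append, List.filterMap_append, ← Multiset.coe_add]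
  rfl

theorem poppedBy_cons : poppedBy τ (e :: t) = poppedBy τ [e] + poppedBy τ t := by
  rw [poppedBy, ← List.singleton_append, List.filterMap_append, ← Multiset.coe_add]
  rfl

theorem mem_pushedBy_sh : i ∈ pushedBy .sh t ↔ pushedBySh t i = true := by
  simp [pushedBy, pushedBySh]

theorem mem_pushedBy_ra : i ∈ pushedBy .ra t ↔ pushedByRa t i = true := by
  simp [pushedBy, pushedByRa]

theorem escore_cons (n : ℕ) (fsh fra frl fre : Option ℕ → ℕ → ℝ) :
    escore n fsh fra frl fre (e :: t) =
      escore n fsh fra frl fre [e] + escore n fsh fra frl fre t := by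
  simp [escore]

variable {e t}

theorem isPushFeature_cons {k : ℕ → Option ℕ} :
    IsPushFeature (e :: t) k ↔ IsPushFeature [e] k ∧ IsPushFeature t k := by
  simp [IsPushFeature]

theorem isPopFeature_cons {n : ℕ} {p : ℕ → ℕ} :
    IsPopFeature n (e :: t) p ↔ IsPopFeature n [e] p ∧ IsPopFeature n t p := by
  simp [IsPopFeature]

end Transitions

section Modifiers

variable (A : Finset (ℕ × ℕ)) {σ : List ℕ} {h m s : ℕ}

/-- The indices that have a head in the arc set `A`. -/
def modifiers : Finset ℕ := A.image Prod.snd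

/-- The elements of the stack `σ` without a head in `A`: those that `rl` may pop. -/
def headless (σ : List ℕ) : Multiset ℕ := (σ : Multiset ℕ).filter (· ∉ modifiers A)

variable {A}

theorem mem_modifiers : m ∈ modifiers A ↔ ∃ h, (h, m) ∈ A := by
  simp [modifiers]

theorem modifiers_insert : modifiers (insert (h, m) A) = insert m (modifiers A) :=
  Finset.image_insert Prod.snd (h, m) A

theorem headless_nil : headless A [] = 0 := rfl

theorem headless_cons_of_notMem (hs : s ∉ modifiers A) :
    headless A (s :: σ) = s ::ₘ headless A σ :=
  Multiset.filter_cons_of_pos (p := (· ∉ modifiers A)) (σ : Multiset ℕ) hs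

theorem headless_cons_of_mem (hs : s ∈ modifiers A) : headless A (s :: σ) = headless A σ :=
  Multiset.filter_cons_of_neg (p := (· ∉ modifiers A)) (σ : Multiset ℕ) (not_not_intro hs)

theorem headless_insert_of_notMem (hm : m ∉ σ) : headless (insert (h, m) A) σ = headless A σ := by
  refine Multiset.filter_congr fun i hi => ?_
  have him : i ≠ m := fun him => hm (him ▸ hi)
  simp only [modifiers_insert, Finset.mem_insert, him, false_or]

end Modifiers

/-- The invariant of arc-eager parsing: no index occurs twice on stack and buffer together, and
no index still in the buffer has a head. -/
structure Config.WellFormed (c : Config) : Prop where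
  nodup : (c.stack ++ c.buffer).Nodup
  notMem_modifiers : ∀ i ∈ c.buffer, i ∉ modifiers c.arcs

theorem head?_buffer_initConfig (n : ℕ) : (initConfig n).buffer.head? = some 0 := by
  simp [initConfig, List.range_succ_eq_map]

theorem Config.wellFormed_initConfig (n : ℕ) : (initConfig n).WellFormed where
  nodup := List.nodup_range
  notMem_modifiers := by simp [initConfig, modifiers]

namespace EStep

variable {c c' : Config} {τ : ETrans}

theorem wellFormed (h : EStep c τ c') (hc : c.WellFormed) : c'.WellFormed := by
  obtain ⟨hnodup, hmod⟩ := hc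
  cases h <;> constructor <;> grind [modifiers_insert]

theorem buffer_eq (h : EStep c τ c') :
    (c.buffer : Multiset ℕ) = pushedBy .sh [(c, τ)] + pushedBy .ra [(c, τ)] + c'.buffer := by
  cases h <;> simp [pushedBy]

theorem stack_add_pushedBy (h : EStep c τ c') :
    (c.stack : Multiset ℕ) + (pushedBy .sh [(c, τ)] + pushedBy .ra [(c, τ)]) =
      poppedBy .rl [(c, τ)] + poppedBy .re [(c, τ)] + c'.stack := by
  cases h <;> simp [pushedBy, poppedBy, add_comm, ← Multiset.cons_coe, ← Multiset.singleton_add]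

theorem headless_add_pushedBy_sh (h : EStep c τ c') (hc : c.WellFormed) :
    headless c.arcs c.stack + pushedBy .sh [(c, τ)] =
      poppedBy .rl [(c, τ)] + headless c'.arcs c'.stack := by
  obtain ⟨hnodup, hmod⟩ := hc
  cases h with
  | sh σ b β A =>
    have hb : b ∉ modifiers A := hmod b List.mem_cons_self
    simp [pushedBy, poppedBy, headless_cons_of_notMem hb, ← Multiset.singleton_add, add_comm]
  | ra s σ b β A =>
    have hb : b ∈ modifiers (insert (s, b) A) := by simp [modifiers_insert]
    have hbσ : b ∉ s :: σ := by grind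
    simp [pushedBy, poppedBy, headless_cons_of_mem hb, headless_insert_of_notMem hbσ]
  | rl s σ b β A hs =>
    have hs : s ∉ modifiers A := by simpa [mem_modifiers] using hs
    have hsσ : s ∉ σ := by grind
    simp [pushedBy, poppedBy, headless_cons_of_notMem hs, headless_insert_of_notMem hsσ]
  | re s σ β A hs =>
    simp [pushedBy, poppedBy, headless_cons_of_mem (mem_modifiers.2 hs)]

theorem arcs_eq {n : ℕ} {k : ℕ → Option ℕ} {p : ℕ → ℕ} (h : EStep c τ c')
    (hk : IsPushFeature [(c, τ)] k) (hp : IsPopFeature n [(c, τ)] p) :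
    c'.arcs = c.arcs ∪ ((poppedBy .rl [(c, τ)]).toFinset.image (fun i => (p i, i))
      ∪ (pushedBy .ra [(c, τ)]).toFinset.image (fun i => ((k i).getD 0, i))) := by
  cases h with
  | sh | re => simp [pushedBy, poppedBy]
  | ra s σ b β A =>
    have hkb : some s = k b := hk _ List.mem_cons_self (.inr rfl) b rfl
    simp [pushedBy, poppedBy, ← hkb]
  | rl s σ b β A hs =>
    have hps : b = p s := hp _ List.mem_cons_self (.inl rfl) s rfl
    simp [pushedBy, poppedBy, ← hps]

theorem escore_eq_sum {n : ℕ} {k : ℕ → Option ℕ} {p : ℕ → ℕ} (h : EStep c τ c')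
    (hk : IsPushFeature [(c, τ)] k) (hp : IsPopFeature n [(c, τ)] p)
    (fsh fra frl fre : Option ℕ → ℕ → ℝ) :
    escore n fsh fra frl fre [(c, τ)] =
      ((pushedBy .sh [(c, τ)]).map fun i => fsh (k i) i).sum +
      ((pushedBy .ra [(c, τ)]).map fun i => fra (k i) i).sum +
      ((poppedBy .rl [(c, τ)]).map fun i => frl (some i) (p i)).sum +
      ((poppedBy .re [(c, τ)]).map fun i => fre (some i) (p i)).sum := by
  cases h with
  | sh σ b β A =>
    have hkb : stackFeat ⟨σ, b :: β, A⟩ = k b := hk _ List.mem_cons_self (.inl rfl) b rfl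
    simp [escore, pushedBy, poppedBy, bufFeat, hkb]
  | ra s σ b β A =>
    have hkb : stackFeat ⟨s :: σ, b :: β, A⟩ = k b := hk _ List.mem_cons_self (.inr rfl) b rfl
    simp [escore, pushedBy, poppedBy, bufFeat, hkb]
  | rl s σ b β A hs =>
    have hps : bufFeat n ⟨s :: σ, b :: β, A⟩ = p s := hp _ List.mem_cons_self (.inl rfl) s rfl
    simp [escore, pushedBy, poppedBy, stackFeat, hps]
  | re s σ β A hs =>
    have hps : bufFeat n ⟨s :: σ, β, A⟩ = p s := hp _ List.mem_cons_self (.inr rfl) s rfl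
    simp [escore, pushedBy, poppedBy, stackFeat, hps]

end EStep

namespace ETrace

variable {c cf : Config} {t : List (Config × ETrans)}

theorem buffer_eq (h : ETrace c t cf) :
    (c.buffer : Multiset ℕ) = pushedBy .sh t + pushedBy .ra t + cf.buffer := by
  induction h with
  | nil => simp [pushedBy]
  | cons hs _ ih =>
    rw [pushedBy_cons .sh, pushedBy_cons .ra, hs.buffer_eq, ih]
    abel

theorem stack_add_pushedBy (h : ETrace c t cf) :
    (c.stack : Multiset ℕ) + (pushedBy .sh t + pushedBy .ra t) =
      poppedBy .rl t + poppedBy .re t + cf.stack := by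
  induction h with
  | nil => simp [pushedBy, poppedBy]
  | cons hs _ ih =>
    rw [pushedBy_cons .sh, pushedBy_cons .ra, poppedBy_cons .rl, poppedBy_cons .re,
      add_add_add_comm, ← add_assoc, hs.stack_add_pushedBy, add_assoc, ih]
    abel

theorem headless_add_pushedBy_sh (h : ETrace c t cf) (hc : c.WellFormed) :
    headless c.arcs c.stack + pushedBy .sh t = poppedBy .rl t + headless cf.arcs cf.stack := by
  induction h with
  | nil => simp [pushedBy, poppedBy]
  | cons hs _ ih =>
    rw [pushedBy_cons, poppedBy_cons, ← add_assoc, hs.headless_add_pushedBy_sh hc, add_assoc,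
      ih (hs.wellFormed hc), add_assoc]

section Features

variable {n : ℕ} {k : ℕ → Option ℕ} {p : ℕ → ℕ}

theorem arcs_eq (h : ETrace c t cf) (hk : IsPushFeature t k) (hp : IsPopFeature n t p) :
    cf.arcs = c.arcs ∪ ((poppedBy .rl t).toFinset.image (fun i => (p i, i))
      ∪ (pushedBy .ra t).toFinset.image (fun i => ((k i).getD 0, i))) := by
  induction h with
  | nil => simp [pushedBy, poppedBy]
  | cons hs _ ih =>
    rw [isPushFeature_cons] at hk
    rw [isPopFeature_cons] at hp
    rw [poppedBy_cons .rl, pushedBy_cons .ra, ih hk.2 hp.2, hs.arcs_eq hk.1 hp.1]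
    simp only [Multiset.toFinset_add, Finset.image_union]
    ac_rfl

theorem escore_eq_sum (h : ETrace c t cf) (hk : IsPushFeature t k) (hp : IsPopFeature n t p)
    (fsh fra frl fre : Option ℕ → ℕ → ℝ) :
    escore n fsh fra frl fre t =
      ((pushedBy .sh t).map fun i => fsh (k i) i).sum +
      ((pushedBy .ra t).map fun i => fra (k i) i).sum +
      ((poppedBy .rl t).map fun i => frl (some i) (p i)).sum +
      ((poppedBy .re t).map fun i => fre (some i) (p i)).sum := by
  induction h with
  | nil => simp [escore, pushedBy, poppedBy]
  | cons hs _ ih =>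
    rw [isPushFeature_cons] at hk
    rw [isPopFeature_cons] at hp
    rw [escore_cons, pushedBy_cons .sh, pushedBy_cons .ra, poppedBy_cons .rl, poppedBy_cons .re,
      ih hk.2 hp.2, hs.escore_eq_sum hk.1 hp.1]
    simp only [Multiset.map_add, Multiset.sum_add]
    ring

end Features

theorem sh_mem_of_stack_eq_nil (h : ETrace c t cf) (hc : c.stack = []) (hcf : cf.stack ≠ []) :
    (c, ETrans.sh) ∈ t := by
  cases h with
  | nil => exact absurd hc hcf
  | cons hs _ =>
    cases hs with
    | sh => exact List.mem_cons_self
    | _ => cases hc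

section Complete

variable {n : ℕ} {A : Finset (ℕ × ℕ)}

theorem pushedBy_sh_add_ra_eq_range (h : ETrace (initConfig n) t ⟨[0], [], A⟩) :
    pushedBy .sh t + pushedBy .ra t = Multiset.range (n + 1) :=
  (h.buffer_eq.trans (add_zero _)).symm

theorem nodup_pushedBy (h : ETrace (initConfig n) t ⟨[0], [], A⟩) :
    (pushedBy .sh t + pushedBy .ra t).Nodup :=
  h.pushedBy_sh_add_ra_eq_range ▸ Multiset.nodup_range (n + 1)

theorem mem_pushedBy_sh_or_ra (h : ETrace (initConfig n) t ⟨[0], [], A⟩) {i : ℕ} :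
    i ∈ pushedBy .sh t ∨ i ∈ pushedBy .ra t ↔ i ≤ n := by
  rw [← Multiset.mem_add, h.pushedBy_sh_add_ra_eq_range, Multiset.mem_range, Nat.lt_succ_iff]

theorem zero_mem_pushedBy_sh (h : ETrace (initConfig n) t ⟨[0], [], A⟩) :
    0 ∈ pushedBy .sh t := by
  rw [mem_pushedBy_sh]
  refine List.any_eq_true.2 ⟨_, h.sh_mem_of_stack_eq_nil rfl (List.cons_ne_nil _ _), ?_⟩
  simp [head?_buffer_initConfig]

theorem zero_notMem_pushedBy_ra (h : ETrace (initConfig n) t ⟨[0], [], A⟩) :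
    0 ∉ pushedBy .ra t :=
  Multiset.disjoint_left.1 (Multiset.nodup_add.1 h.nodup_pushedBy).2.2 h.zero_mem_pushedBy_sh

theorem pushedBy_sh_add_ra_eq_poppedBy (h : ETrace (initConfig n) t ⟨[0], [], A⟩) :
    pushedBy .sh t + pushedBy .ra t = poppedBy .rl t + poppedBy .re t + {0} := by
  simpa only [initConfig, Multiset.coe_nil, zero_add, Multiset.coe_singleton]
    using h.stack_add_pushedBy

theorem pushedBy_sh_eq_add_headless (h : ETrace (initConfig n) t ⟨[0], [], A⟩) :
    pushedBy .sh t = poppedBy .rl t + headless A [0] := by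
  simpa only [initConfig, headless_nil, zero_add] using
    h.headless_add_pushedBy_sh (Config.wellFormed_initConfig n)

theorem zero_notMem_modifiers (h : ETrace (initConfig n) t ⟨[0], [], A⟩) : 0 ∉ modifiers A := by
  intro h0
  have hsh : pushedBy .sh t = poppedBy .rl t := by
    rw [h.pushedBy_sh_eq_add_headless, headless_cons_of_mem h0, headless_nil, add_zero]
  have hra : pushedBy .ra t = poppedBy .re t + {0} := by
    simpa only [hsh, add_assoc, add_right_inj] using h.pushedBy_sh_add_ra_eq_poppedBy
  exact h.zero_notMem_pushedBy_ra (by simp [hra])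

theorem pushedBy_sh_eq_cons_poppedBy_rl (h : ETrace (initConfig n) t ⟨[0], [], A⟩) :
    pushedBy .sh t = 0 ::ₘ poppedBy .rl t := by
  rw [h.pushedBy_sh_eq_add_headless, headless_cons_of_notMem h.zero_notMem_modifiers,
    headless_nil, Multiset.add_cons, add_zero]

theorem pushedBy_ra_eq_poppedBy_re (h : ETrace (initConfig n) t ⟨[0], [], A⟩) :
    pushedBy .ra t = poppedBy .re t := by
  have hadd := h.pushedBy_sh_add_ra_eq_poppedBy
  rw [h.pushedBy_sh_eq_cons_poppedBy_rl, ← Multiset.singleton_add, add_comm _ {0},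
    add_assoc] at hadd
  exact add_left_cancel (add_left_cancel hadd)

theorem val_filter_pushedBySh (h : ETrace (initConfig n) t ⟨[0], [], A⟩) :
    ((Finset.Icc 1 n).filter (fun i => pushedBySh t i = true)).val = poppedBy .rl t := by
  have hnodup := (Multiset.nodup_add.1 h.nodup_pushedBy).1
  have hmem (i : ℕ) : i ∈ pushedBy .sh t ↔ i = 0 ∨ i ∈ poppedBy .rl t := by
    rw [h.pushedBy_sh_eq_cons_poppedBy_rl, Multiset.mem_cons]
  rw [h.pushedBy_sh_eq_cons_poppedBy_rl, Multiset.nodup_cons] at hnodup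
  refine (Multiset.Nodup.ext (Finset.nodup _) hnodup.2).2 fun i => ?_
  simp only [Finset.mem_val, Finset.mem_filter, Finset.mem_Icc, ← mem_pushedBy_sh]
  grind [h.mem_pushedBy_sh_or_ra (i := i)]

theorem val_filter_pushedByRa (h : ETrace (initConfig n) t ⟨[0], [], A⟩) :
    ((Finset.Icc 1 n).filter (fun i => pushedByRa t i = true)).val = poppedBy .re t := by
  have hnodup := (Multiset.nodup_add.1 h.nodup_pushedBy).2.1
  have hzero := h.zero_notMem_pushedBy_ra
  rw [← h.pushedBy_ra_eq_poppedBy_re]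
  refine (Multiset.Nodup.ext (Finset.nodup _) hnodup).2 fun i => ?_
  simp only [Finset.mem_val, Finset.mem_filter, Finset.mem_Icc, ← mem_pushedBy_ra]
  grind [h.mem_pushedBy_sh_or_ra (i := i)]

end Complete

end ETrace

/-- **Score decomposition for arc-eager** (the bookkeeping underlying the
score-annotated deduction rules). Here `k i` is the stack-top feature of the
configuration in which `i` is pushed and `p i` is the buffer-front feature of
the configuration in which `i` is popped (encoded by the hypotheses `hk`, `hp`,
which pin these values down since each index is pushed/popped exactly once). -/
theorem arc_eager_score_decomposition
    (n : ℕ) (hn : 1 ≤ n)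
    (fsh fra frl fre : Option ℕ → ℕ → ℝ)
    (t : List (Config × ETrans)) (A : Finset (ℕ × ℕ))
    (ht : ETrace (initConfig n) t ⟨[0], [], A⟩)
    (k : ℕ → Option ℕ) (p : ℕ → ℕ)
    (hk : ∀ e ∈ t, (e.2 = ETrans.sh ∨ e.2 = ETrans.ra) →
        ∀ i, e.1.buffer.head? = some i → stackFeat e.1 = k i)
    (hp : ∀ e ∈ t, (e.2 = ETrans.rl ∨ e.2 = ETrans.re) →
        ∀ i, e.1.stack.head? = some i → bufFeat n e.1 = p i) :
    escore n fsh fra frl fre t =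
        fsh none 0
        + ∑ i ∈ (Finset.Icc 1 n).filter (fun i => pushedBySh t i = true),
            (fsh (k i) i + frl (some i) (p i))
        + ∑ i ∈ (Finset.Icc 1 n).filter (fun i => pushedByRa t i = true),
            (fra (k i) i + fre (some i) (p i))
    ∧ A = ((Finset.Icc 1 n).filter (fun i => pushedBySh t i = true)).image
              (fun i => (p i, i))
          ∪ ((Finset.Icc 1 n).filter (fun i => pushedByRa t i = true)).image
              (fun i => ((k i).getD 0, i)) := by
  have hk0 : none = k 0 :=
    hk _ (ht.sh_mem_of_stack_eq_nil rfl (List.cons_ne_nil _ _)) (.inl rfl) 0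
      (head?_buffer_initConfig n)
  have hscore := ht.escore_eq_sum hk hp fsh fra frl fre
  have harcs := ht.arcs_eq hk hp
  rw [ht.pushedBy_sh_eq_cons_poppedBy_rl, ht.pushedBy_ra_eq_poppedBy_re, ← ht.val_filter_pushedBySh,
    ← ht.val_filter_pushedByRa, Multiset.map_cons, Multiset.sum_cons, ← hk0] at hscore
  rw [ht.pushedBy_ra_eq_poppedBy_re, ← ht.val_filter_pushedBySh, ← ht.val_filter_pushedByRa,
    Finset.val_toFinset, Finset.val_toFinset] at harcs
  refine ⟨?_, harcs.trans (Finset.empty_union _)⟩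
  rw [hscore]
  simp only [← Finset.sum_eq_multiset_sum, Finset.sum_add_distrib]
  ring
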